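/- arXiv:2201.09262 — 2 statements merged into one kernel-verified Lean document; each statement's English description precedes it below -/
import Mathlib

section
/- For all nonnegative integers a, b: ∫₀¹ arcsin^(2a+1)(x)/((2a+1)! · x) · arccos^(2b+1)(x)/(2b+1)! dx = T(a,b), where T(a,b) = t(2^a, 3, 2^b). -/
open Real

/-- `∑_{n < m₁ < ⋯ < m_b} 1/((2m₁+1)² ⋯ (2m_b+1)²)`; equals `1` when `b = 0`. -/
noncomputable def tTail (b n : ℕ) : ℝ :=
  ∑' f : {f : Fin b → ℕ // StrictMono f ∧ ∀ i, n < f i},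
    ∏ i, 1 / (2 * (f.1 i : ℝ) + 1) ^ 2

/-- `∑_{0 ≤ n₁ < ⋯ < n_a < n} 1/((2n₁+1)² ⋯ (2n_a+1)²)`; equals `1` when `a = 0`. -/
noncomputable def tHead (a n : ℕ) : ℝ :=
  ∑' f : {f : Fin a → ℕ // StrictMono f ∧ ∀ i, f i < n},
    ∏ i, 1 / (2 * (f.1 i : ℝ) + 1) ^ 2

/-- The multiple t-value `t(2,…,2,3,2,…,2)` with `a` twos before the `3` and `b` after. -/
noncomputable def T (a b : ℕ) : ℝ :=
  ∑' n : ℕ, (1 / (2 * (n : ℝ) + 1) ^ 3) * tHead a n * tTail b n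

/-!
The substitution `x = sin θ` turns the integral into the `(2b + 2)`-fold iterated integral of
`θ ^ (2a + 1) / (2a + 1)! * cot θ`, taken from `0` to `π / 2`. Write `wₙ = 1 / (2n + 1)²` and let
`gₙ` be the multiple of `sin ^ (2n + 1)` with integral `1` over `[0, π / 2]`. Everything rests on
one identity: the second derivative of `wₙ₊₁ gₙ₊₁` is `gₙ - gₙ₊₁`.

* summed by parts, it yields by induction on `a` the expansion
  `θ ^ (2a + 1) / (2a + 1)! = ∑ₙ tHead a n * wₙ gₙ(θ)`;
* telescoped in `n`, it yields by induction on `b` that the `(2b + 1)`-fold iterated integral of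
  `gₙ` from `0` to `π / 2` is `tTail b n`.

Since `wₙ gₙ(θ) cot θ` is `1 / (2n + 1)` times the derivative of `wₙ gₙ`, integrating the expansion
termwise contributes `tHead a n * tTail b n / (2n + 1)³` for each `n`.
-/

open Filter Topology Set

section SymmetricSums

variable {ι : Type*}

/-- The finite subsets of `S` with `k` elements, the index set of `esymmSum`. -/
def finsetsOfCard (S : Set ι) (k : ℕ) : Set (Finset ι) :=
  {s | s.card = k ∧ (s : Set ι) ⊆ S}

/-- The `k`-th elementary symmetric function of the weights `w i`, `i ∈ S`, where `S` may be
infinite. -/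
noncomputable def esymmSum (w : ι → ℝ) (k : ℕ) (S : Set ι) : ℝ :=
  ∑' s : finsetsOfCard S k, ∏ i ∈ s.1, w i

theorem esymmSum_eq_tsum_indicator (w : ι → ℝ) (k : ℕ) (S : Set ι) :
    esymmSum w k S = ∑' s, (finsetsOfCard S k).indicator (fun s => ∏ i ∈ s, w i) s :=
  tsum_subtype _ fun s => ∏ i ∈ s, w i

theorem finsetsOfCard_zero (S : Set ι) : finsetsOfCard S 0 = {∅} := by
  ext s
  simp +contextual [finsetsOfCard]

theorem finsetsOfCard_empty_succ (k : ℕ) : finsetsOfCard (∅ : Set ι) (k + 1) = ∅ := by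
  refine eq_empty_of_forall_notMem fun s ⟨hcard, hs⟩ => ?_
  rw [subset_empty_iff, Finset.coe_eq_empty] at hs
  simp [hs] at hcard

theorem finsetsOfCard_insert [DecidableEq ι] {S : Set ι} {m : ι} (hm : m ∉ S) (k : ℕ) :
    finsetsOfCard (insert m S) (k + 1) =
      finsetsOfCard S (k + 1) ∪ insert m '' finsetsOfCard S k := by
  ext s
  simp only [finsetsOfCard, mem_union, mem_ofPred_eq, mem_image]
  constructor
  · rintro ⟨hcard, hs⟩
    by_cases hms : m ∈ s
    · refine .inr ⟨s.erase m, ⟨by simp [hms, hcard], fun i hi => ?_⟩, Finset.insert_erase hms⟩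
      obtain ⟨him, his⟩ := Finset.mem_erase.1 hi
      exact (hs his).resolve_left him
    · exact .inl ⟨hcard, (subset_insert_iff_of_notMem (by simpa)).1 hs⟩
  · rintro (⟨hcard, hs⟩ | ⟨t, ⟨hcard, ht⟩, rfl⟩)
    · exact ⟨hcard, hs.trans (subset_insert m S)⟩
    · refine ⟨?_, ?_⟩
      · rw [Finset.card_insert_of_notMem fun h => hm (ht h), hcard]
      · rw [Finset.coe_insert]
        exact insert_subset_insert ht

variable {w : ι → ℝ}

@[simp]
theorem esymmSum_zero (w : ι → ℝ) (S : Set ι) : esymmSum w 0 S = 1 := by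
  rw [esymmSum, finsetsOfCard_zero, tsum_singleton ∅ fun s => ∏ i ∈ s, w i]
  simp

@[simp]
theorem esymmSum_empty_succ (w : ι → ℝ) (k : ℕ) : esymmSum w (k + 1) ∅ = 0 := by
  rw [esymmSum, finsetsOfCard_empty_succ, tsum_empty]

theorem esymmSum_nonneg (hw : 0 ≤ w) (k : ℕ) (S : Set ι) : 0 ≤ esymmSum w k S :=
  tsum_nonneg fun _ => Finset.prod_nonneg fun i _ => hw i

theorem esymmSum_le_tsum_prod (hw : 0 ≤ w) (hsum : Summable w) (k : ℕ) (S : Set ι) :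
    esymmSum w k S ≤ ∑' s : Finset ι, ∏ i ∈ s, w i :=
  (summable_finsetProd_of_summable_nonneg hw hsum).tsum_subtype_le _ _
    fun _ => Finset.prod_nonneg fun i _ => hw i

theorem esymmSum_insert (hsum : Summable w) {S : Set ι} {m : ι} (hm : m ∉ S) (k : ℕ) :
    esymmSum w (k + 1) (insert m S) = esymmSum w (k + 1) S + w m * esymmSum w k S := by
  classical
  have hprod : Summable fun s : Finset ι => ∏ i ∈ s, w i :=
    summable_finsetProd_of_summable_norm hsum.norm
  have hmem {s : Finset ι} (hs : s ∈ finsetsOfCard S k) : m ∉ s := fun h => hm (hs.2 h)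
  have hinj : InjOn (insert m : Finset ι → Finset ι) (finsetsOfCard S k) := fun s hs t ht h => by
    rw [← Finset.erase_insert (hmem hs), h, Finset.erase_insert (hmem ht)]
  have hdisj : Disjoint (finsetsOfCard S (k + 1)) (insert m '' finsetsOfCard S k) := by
    rw [Set.disjoint_left]
    rintro _ hs ⟨t, -, rfl⟩
    exact hm (hs.2 (Finset.mem_insert_self m t))
  rw [esymmSum, finsetsOfCard_insert hm,
    Summable.tsum_union_disjoint hdisj (hprod.subtype _) (hprod.subtype _),
    tsum_image (fun s => ∏ i ∈ s, w i) hinj, esymmSum, esymmSum, ← tsum_mul_left]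
  congr 1
  exact tsum_congr fun s => Finset.prod_insert (hmem s.2)

theorem tendsto_esymmSum_succ_zero {β : Type*} {l : Filter β} (hsum : Summable w)
    {S : β → Set ι} (hS : ∀ i, ∀ᶠ b in l, i ∉ S b) (k : ℕ) :
    Tendsto (fun b => esymmSum w (k + 1) (S b)) l (𝓝 0) := by
  have hvanish (s : Finset ι) : ∀ᶠ b in l, s ∉ finsetsOfCard (S b) (k + 1) := by
    by_cases hs : s.Nonempty
    · obtain ⟨i, hi⟩ := hs
      filter_upwards [hS i] with b hb hsb using hb (hsb.2 hi)
    · exact .of_forall fun b hsb => hs (Finset.card_pos.1 (by rw [hsb.1]; exact k.succ_pos))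
  have hlim (s : Finset ι) : Tendsto
      (fun b => (finsetsOfCard (S b) (k + 1)).indicator (fun s => ∏ i ∈ s, w i) s) l (𝓝 0) :=
    tendsto_const_nhds.congr' <| (hvanish s).mono fun b hb => (indicator_of_notMem hb _).symm
  simpa only [esymmSum_eq_tsum_indicator, tsum_zero] using
    tendsto_tsum_of_dominated_convergence
      (summable_finsetProd_of_summable_norm hsum.norm).norm hlim
      (.of_forall fun _ s => norm_indicator_le_norm_self _ _)

/-- Strictly increasing `k`-tuples in `S`, identified with their sets of values. -/
noncomputable def strictMonoEquivFinsetsOfCard [LinearOrder ι] (k : ℕ) (S : Set ι) :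
    {f : Fin k → ι // StrictMono f ∧ ∀ i, f i ∈ S} ≃ finsetsOfCard S k where
  toFun f := ⟨Finset.univ.map ⟨f.1, f.2.1.injective⟩, by simp, by
    simpa [range_subset_iff] using f.2.2⟩
  invFun s := ⟨s.1.orderEmbOfFin s.2.1, OrderEmbedding.strictMono _, fun i =>
    s.2.2 (s.1.orderEmbOfFin_mem s.2.1 i)⟩
  left_inv f := Subtype.ext (Finset.orderEmbOfFin_unique _ (by simp) f.2.1).symm
  right_inv s := Subtype.ext <| by
    simp [← Finset.coe_inj]

theorem tsum_strictMono_prod_eq_esymmSum [LinearOrder ι] (w : ι → ℝ) (k : ℕ) (S : Set ι) :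
    ∑' f : {f : Fin k → ι // StrictMono f ∧ ∀ i, f i ∈ S}, ∏ i, w (f.1 i) = esymmSum w k S := by
  rw [esymmSum, ← (strictMonoEquivFinsetsOfCard k S).tsum_eq]
  simp [strictMonoEquivFinsetsOfCard]

end SymmetricSums

section IteratedIntegrals

variable {f f' f'' : ℝ → ℝ} {x : ℝ}

/-- The `(k + 1)`-fold iterated integral of `f` from `0`, written as a single integral by Cauchy's
formula. -/
noncomputable def iteratedIntegral (k : ℕ) (f : ℝ → ℝ) (x : ℝ) : ℝ :=
  ∫ t in (0 : ℝ)..x, (x - t) ^ k / k.factorial * f t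

theorem iteratedIntegral_const_mul (k : ℕ) (c : ℝ) (f : ℝ → ℝ) (x : ℝ) :
    iteratedIntegral k (fun t => c * f t) x = c * iteratedIntegral k f x := by
  simp only [iteratedIntegral, mul_left_comm _ c, intervalIntegral.integral_const_mul]

theorem iteratedIntegral_sub {f g : ℝ → ℝ} (hf : Continuous f) (hg : Continuous g) (k : ℕ)
    (x : ℝ) :
    iteratedIntegral k (fun t => f t - g t) x =
      iteratedIntegral k f x - iteratedIntegral k g x := by
  simp only [iteratedIntegral, mul_sub]
  exact intervalIntegral.integral_sub (Continuous.intervalIntegrable (by fun_prop) _ _)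
    (Continuous.intervalIntegrable (by fun_prop) _ _)

theorem iteratedIntegral_nonneg (hx : 0 ≤ x) (hf : ∀ t ∈ Icc 0 x, 0 ≤ f t) (k : ℕ) :
    0 ≤ iteratedIntegral k f x :=
  intervalIntegral.integral_nonneg hx fun t ht =>
    mul_nonneg (div_nonneg (pow_nonneg (sub_nonneg.2 ht.2) k) (Nat.cast_nonneg _)) (hf t ht)

theorem hasDerivAt_pow_succ_div_factorial (k : ℕ) (t : ℝ) :
    HasDerivAt (fun t : ℝ => t ^ (k + 1) / (k + 1).factorial) (t ^ k / k.factorial) t := by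
  refine ((hasDerivAt_pow (k + 1) t).div_const _).congr_deriv ?_
  rw [Nat.factorial_succ, Nat.cast_mul, Nat.add_sub_cancel]
  exact mul_div_mul_left _ _ (Nat.cast_ne_zero.2 k.succ_ne_zero)

theorem iteratedIntegral_zero_deriv (hf : ∀ t, HasDerivAt f (f' t) t) (hf' : Continuous f')
    (x : ℝ) : iteratedIntegral 0 f' x = f x - f 0 := by
  simpa [iteratedIntegral] using intervalIntegral.integral_eq_sub_of_hasDerivAt
    (fun t _ => hf t) (hf'.intervalIntegrable 0 x)

theorem iteratedIntegral_succ_deriv (hf : ∀ t, HasDerivAt f (f' t) t) (hf' : Continuous f')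
    (hf0 : f 0 = 0) (k : ℕ) (x : ℝ) :
    iteratedIntegral (k + 1) f' x = iteratedIntegral k f x := by
  have hkernel (t : ℝ) : HasDerivAt (fun t => (x - t) ^ (k + 1) / (k + 1).factorial)
      (-((x - t) ^ k / k.factorial)) t := by
    simpa using (hasDerivAt_pow_succ_div_factorial k (x - t)).comp_const_sub x t
  have hparts := intervalIntegral.integral_mul_deriv_eq_deriv_mul
    (fun t _ => hkernel t) (fun t _ => hf t)
    (Continuous.intervalIntegrable (by fun_prop) 0 x) (hf'.intervalIntegrable 0 x)
  simpa [iteratedIntegral, hf0] using hparts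

theorem iteratedIntegral_one_deriv_deriv (hf : ∀ t, HasDerivAt f (f' t) t)
    (hf' : ∀ t, HasDerivAt f' (f'' t) t) (hf'' : Continuous f'') (hf0 : f 0 = 0) (hf'0 : f' 0 = 0)
    (x : ℝ) : iteratedIntegral 1 f'' x = f x := by
  have hcont : Continuous f' := continuous_iff_continuousAt.2 fun t => (hf' t).continuousAt
  rw [iteratedIntegral_succ_deriv hf' hf'' hf'0, iteratedIntegral_zero_deriv hf hcont, hf0,
    sub_zero]

theorem iteratedIntegral_add_two_deriv_deriv (hf : ∀ t, HasDerivAt f (f' t) t)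
    (hf' : ∀ t, HasDerivAt f' (f'' t) t) (hf'' : Continuous f'') (hf0 : f 0 = 0) (hf'0 : f' 0 = 0)
    (k : ℕ) (x : ℝ) : iteratedIntegral (k + 2) f'' x = iteratedIntegral k f x := by
  have hcont : Continuous f' := continuous_iff_continuousAt.2 fun t => (hf' t).continuousAt
  rw [iteratedIntegral_succ_deriv hf' hf'' hf'0, iteratedIntegral_succ_deriv hf hcont hf0]

theorem iteratedIntegral_one_pow_div_factorial (k : ℕ) (x : ℝ) :
    iteratedIntegral 1 (fun t => t ^ k / k.factorial) x =
      x ^ (k + 2) / (k + 2).factorial :=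
  iteratedIntegral_one_deriv_deriv (hasDerivAt_pow_succ_div_factorial (k + 1))
    (hasDerivAt_pow_succ_div_factorial k) (by fun_prop) (by simp) (by simp) x

theorem hasSum_iteratedIntegral {ι : Type*} [Countable ι] {F : ι → ℝ → ℝ} {bound : ι → ℝ}
    (hx : 0 ≤ x) (hF : ∀ n, Continuous (F n)) (hbound : ∀ n, ∀ t ∈ Ioc 0 x, |F n t| ≤ bound n)
    (hsum : Summable bound) (hlim : ∀ t ∈ Ioc 0 x, HasSum (fun n => F n t) (f t)) (k : ℕ) :
    HasSum (fun n => iteratedIntegral k (F n) x) (iteratedIntegral k f x) := by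
  refine intervalIntegral.hasSum_integral_of_dominated_convergence
    (fun n _ => x ^ k / k.factorial * bound n)
    (fun n => Continuous.aestronglyMeasurable (by fun_prop))
    (fun n => .of_forall fun t ht => ?_)
    (.of_forall fun t _ => hsum.mul_left _) intervalIntegrable_const
    (.of_forall fun t ht => ?_)
  · rw [uIoc_of_le hx] at ht
    have hxt : 0 ≤ x - t := sub_nonneg.2 ht.2
    rw [norm_mul, norm_of_nonneg (by positivity), norm_eq_abs]
    gcongr
    · linarith [ht.1]
    · exact hbound n t ht
  · rw [uIoc_of_le hx] at ht
    exact (hlim t ht).mul_left _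

end IteratedIntegrals

theorem image_sin_Ioc_zero_pi_div_two : sin '' Ioc 0 (π / 2) = Ioc 0 1 := by
  ext x
  constructor
  · rintro ⟨t, ht, rfl⟩
    exact ⟨sin_pos_of_pos_of_lt_pi ht.1 (by linarith [ht.2, pi_pos]), sin_le_one t⟩
  · intro hx
    exact ⟨arcsin x, ⟨arcsin_pos.2 hx.1, arcsin_le_pi_div_two x⟩,
      sin_arcsin (by linarith [hx.1]) hx.2⟩

theorem integral_mul_arccos_pow_div_factorial (f : ℝ → ℝ) (k : ℕ) :
    ∫ x in (0 : ℝ)..1, f x * (arccos x ^ k / k.factorial) =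
      iteratedIntegral k (fun t => f (sin t) * cos t) (π / 2) := by
  have hmono : MonotoneOn sin (Ioc 0 (π / 2)) :=
    monotoneOn_sin.mono fun t ht => ⟨by linarith [ht.1, pi_pos], ht.2⟩
  rw [iteratedIntegral, intervalIntegral.integral_of_le zero_le_one,
    intervalIntegral.integral_of_le pi_div_two_pos.le, ← image_sin_Ioc_zero_pi_div_two,
    MeasureTheory.integral_image_eq_integral_deriv_smul_of_monotoneOn measurableSet_Ioc
      (fun t _ => (hasDerivAt_sin t).hasDerivWithinAt) hmono]
  refine MeasureTheory.setIntegral_congr_fun measurableSet_Ioc fun t ht => ?_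
  simp only [arccos, arcsin_sin (by linarith [ht.1, pi_pos] : -(π / 2) ≤ t) ht.2, smul_eq_mul]
  ring

section SineDensities

/-- The normalised central binomial coefficient `binom(2n, n) / 4ⁿ`. -/
noncomputable def normCentralBinom (n : ℕ) : ℝ :=
  n.centralBinom / 4 ^ n

theorem normCentralBinom_zero : normCentralBinom 0 = 1 := by
  simp [normCentralBinom]

theorem normCentralBinom_pos (n : ℕ) : 0 < normCentralBinom n :=
  div_pos (Nat.cast_pos.2 n.centralBinom_pos) (by positivity)

theorem two_mul_add_two_mul_normCentralBinom_succ (n : ℕ) :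
    (2 * n + 2) * normCentralBinom (n + 1) = (2 * n + 1) * normCentralBinom n := by
  have h : ((n : ℝ) + 1) * (n + 1).centralBinom = 2 * (2 * n + 1) * n.centralBinom := by
    exact_mod_cast n.succ_mul_centralBinom_succ
  rw [normCentralBinom, normCentralBinom, pow_succ]
  field_simp
  linear_combination 2 * h

theorem normCentralBinom_sq_le (n : ℕ) : normCentralBinom n ^ 2 ≤ 1 / (2 * n + 1) := by
  induction n with
  | zero => simp [normCentralBinom_zero]
  | succ n ih =>
    rw [le_div_iff₀ (by positivity)] at ih ⊢
    push_cast
    have hrec := two_mul_add_two_mul_normCentralBinom_succ n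
    have hsq : (2 * (n : ℝ) + 1) * (2 * (n + 1) + 1) ≤ (2 * n + 2) ^ 2 := by nlinarith
    refine le_of_mul_le_mul_left ?_ (show (0 : ℝ) < (2 * n + 2) ^ 2 by positivity)
    calc (2 * (n : ℝ) + 2) ^ 2 * (normCentralBinom (n + 1) ^ 2 * (2 * ((n : ℝ) + 1) + 1))
        = normCentralBinom n ^ 2 * (2 * (n : ℝ) + 1) *
            ((2 * (n : ℝ) + 1) * (2 * ((n : ℝ) + 1) + 1)) := by
          linear_combination (2 * ((n : ℝ) + 1) + 1) *
            ((2 * n + 2) * normCentralBinom (n + 1) + (2 * n + 1) * normCentralBinom n) * hrec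
      _ ≤ 1 * (2 * (n : ℝ) + 2) ^ 2 := by gcongr
      _ = (2 * (n : ℝ) + 2) ^ 2 * 1 := mul_comm _ _

theorem tendsto_normCentralBinom_zero : Tendsto normCentralBinom atTop (𝓝 0) := by
  have hbound : Tendsto (fun n : ℕ => 1 / (2 * (n : ℝ) + 1)) atTop (𝓝 0) := by
    refine tendsto_const_nhds.div_atTop (tendsto_atTop_add_const_right _ _ ?_)
    exact tendsto_natCast_atTop_atTop.const_mul_atTop two_pos
  have hsq := squeeze_zero (fun n => sq_nonneg _) normCentralBinom_sq_le hbound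
  simpa [sqrt_sq (normCentralBinom_pos _).le] using hsq.sqrt

/-- The multiple of `sin ^ (2n + 1)` whose integral over `[0, π / 2]` is `1`. -/
noncomputable def sinDensity (n : ℕ) (θ : ℝ) : ℝ :=
  (2 * n + 1) * normCentralBinom n * sin θ ^ (2 * n + 1)

/-- The weights `1 / (2n + 1)²` of the multiple `t`-values. -/
noncomputable def invOddSq (n : ℕ) : ℝ :=
  1 / (2 * n + 1) ^ 2

theorem invOddSq_nonneg : 0 ≤ invOddSq :=
  fun n => by rw [Pi.zero_apply, invOddSq]; positivity

theorem summable_invOddSq : Summable invOddSq := by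
  have h : Summable fun n : ℕ => 1 / (n : ℝ) ^ 2 := summable_one_div_nat_pow.2 one_lt_two
  have hinj : Function.Injective fun n : ℕ => 2 * n + 1 := fun m n hmn => by grind
  refine (h.comp_injective hinj).congr fun n => ?_
  simp [invOddSq]

theorem sinDensity_zero : sinDensity 0 = sin := by
  ext θ
  simp [sinDensity, normCentralBinom_zero]

@[fun_prop]
theorem continuous_sinDensity (n : ℕ) : Continuous (sinDensity n) := by
  unfold sinDensity
  fun_prop

theorem sinDensity_nonneg (n : ℕ) {θ : ℝ} (hθ : θ ∈ Icc 0 (π / 2)) : 0 ≤ sinDensity n θ := by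
  have hsin : 0 ≤ sin θ := sin_nonneg_of_nonneg_of_le_pi hθ.1 (by linarith [hθ.2, pi_pos])
  have hc := normCentralBinom_pos n
  rw [sinDensity]
  positivity

theorem monotoneOn_sinDensity (n : ℕ) : MonotoneOn (sinDensity n) (Icc 0 (π / 2)) := by
  intro s hs t ht hst
  have hsin : 0 ≤ sin s := sin_nonneg_of_nonneg_of_le_pi hs.1 (by linarith [hs.2, pi_pos])
  have hmono : sin s ≤ sin t :=
    sin_le_sin_of_le_of_le_pi_div_two (by linarith [hs.1, pi_pos]) ht.2 hst
  have hc := normCentralBinom_pos n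
  rw [sinDensity, sinDensity]
  gcongr

theorem invOddSq_mul_sinDensity (n : ℕ) (θ : ℝ) :
    invOddSq n * sinDensity n θ = normCentralBinom n / (2 * n + 1) * sin θ ^ (2 * n + 1) := by
  rw [invOddSq, sinDensity]
  field_simp

theorem hasDerivAt_invOddSq_mul_sinDensity (n : ℕ) (θ : ℝ) :
    HasDerivAt (fun θ => invOddSq n * sinDensity n θ)
      (normCentralBinom n * sin θ ^ (2 * n) * cos θ) θ := by
  simp only [invOddSq_mul_sinDensity]
  refine (((hasDerivAt_sin θ).pow (2 * n + 1)).const_mul _).congr_deriv ?_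
  push_cast [Nat.add_sub_cancel]
  field_simp

theorem hasDerivAt_deriv_invOddSq_mul_sinDensity_succ (n : ℕ) (θ : ℝ) :
    HasDerivAt (fun θ => normCentralBinom (n + 1) * sin θ ^ (2 * (n + 1)) * cos θ)
      (sinDensity n θ - sinDensity (n + 1) θ) θ := by
  refine ((((hasDerivAt_sin θ).pow (2 * (n + 1))).const_mul _).mul
    (hasDerivAt_cos θ)).congr_deriv ?_
  simp only [sinDensity, Pi.pow_apply, show 2 * (n + 1) - 1 = 2 * n + 1 by omega]
  push_cast
  linear_combination sin θ ^ (2 * n + 1) * two_mul_add_two_mul_normCentralBinom_succ n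
    + normCentralBinom (n + 1) * (2 * n + 2) * sin θ ^ (2 * n + 1) * cos_sq' θ

theorem iteratedIntegral_zero_sinDensity_pi_div_two (n : ℕ) :
    iteratedIntegral 0 (sinDensity n) (π / 2) = 1 := by
  induction n with
  | zero =>
    rw [sinDensity_zero, iteratedIntegral_zero_deriv (f := fun θ => -cos θ)
      (fun θ => by simpa using (hasDerivAt_cos θ).fun_neg) continuous_sin]
    simp
  | succ n ih =>
    have hdiff := iteratedIntegral_zero_deriv
      (hasDerivAt_deriv_invOddSq_mul_sinDensity_succ n) (by fun_prop) (π / 2)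
    rw [iteratedIntegral_sub (by fun_prop) (by fun_prop), ih] at hdiff
    exact (sub_eq_zero.1 (by simpa using hdiff)).symm

theorem iteratedIntegral_one_sinDensity_sub_succ (n : ℕ) (θ : ℝ) :
    iteratedIntegral 1 (sinDensity n) θ - iteratedIntegral 1 (sinDensity (n + 1)) θ =
      invOddSq (n + 1) * sinDensity (n + 1) θ := by
  rw [← iteratedIntegral_sub (by fun_prop) (by fun_prop)]
  exact iteratedIntegral_one_deriv_deriv (hasDerivAt_invOddSq_mul_sinDensity (n + 1))
    (hasDerivAt_deriv_invOddSq_mul_sinDensity_succ n) (by fun_prop)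
    (by simp [sinDensity]) (by simp) θ

theorem iteratedIntegral_add_two_sinDensity_sub_succ (k n : ℕ) (θ : ℝ) :
    iteratedIntegral (k + 2) (sinDensity n) θ - iteratedIntegral (k + 2) (sinDensity (n + 1)) θ =
      invOddSq (n + 1) * iteratedIntegral k (sinDensity (n + 1)) θ := by
  rw [← iteratedIntegral_sub (by fun_prop) (by fun_prop), ← iteratedIntegral_const_mul]
  exact iteratedIntegral_add_two_deriv_deriv (hasDerivAt_invOddSq_mul_sinDensity (n + 1))
    (hasDerivAt_deriv_invOddSq_mul_sinDensity_succ n) (by fun_prop)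
    (by simp [sinDensity]) (by simp) k θ

theorem sub_pow_succ_div_factorial_le_cos {t θ : ℝ} (ht : t ∈ Icc 0 θ) (hθ : θ ≤ π / 2) (k : ℕ) :
    (θ - t) ^ (k + 1) / (k + 1).factorial ≤ (π / 2) ^ (k + 1) * cos t := by
  have hsub : 0 ≤ θ - t := sub_nonneg.2 ht.2
  have hcos : θ - t ≤ π / 2 * cos t := by
    have h := mul_le_mul_of_nonneg_left (one_sub_mul_le_cos ht.1 (ht.2.trans hθ))
      pi_div_two_pos.le
    have hpi : π / 2 * (1 - 2 / π * t) = π / 2 - t := by field_simp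
    linarith
  calc (θ - t) ^ (k + 1) / (k + 1).factorial
      ≤ (θ - t) ^ k * (θ - t) := by
        rw [pow_succ]
        exact div_le_self (by positivity) (Nat.one_le_cast.2 (Nat.factorial_pos _))
    _ ≤ (π / 2) ^ k * (π / 2 * cos t) := by
        gcongr
        linarith [ht.1]
    _ = (π / 2) ^ (k + 1) * cos t := by ring

theorem integral_cos_mul_sinDensity_le (n : ℕ) (θ : ℝ) :
    ∫ t in (0 : ℝ)..θ, cos t * sinDensity n t ≤ normCentralBinom n := by
  have hderiv (t : ℝ) : HasDerivAt
      (fun t => (2 * n + 1) / (2 * n + 2) * normCentralBinom n * sin t ^ (2 * n + 2))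
      (cos t * sinDensity n t) t := by
    refine (((hasDerivAt_sin t).pow (2 * n + 2)).const_mul _).congr_deriv ?_
    rw [sinDensity, show 2 * n + 2 - 1 = 2 * n + 1 by omega]
    push_cast
    field_simp
  rw [intervalIntegral.integral_eq_sub_of_hasDerivAt (fun t _ => hderiv t)
    (Continuous.intervalIntegrable (by fun_prop) _ _), sin_zero, zero_pow (by omega), mul_zero,
    sub_zero]
  have hratio : (2 * (n : ℝ) + 1) / (2 * n + 2) ≤ 1 :=
    div_le_one_of_le₀ (by linarith) (by positivity)
  have hpow : (sin θ ^ 2) ^ (n + 1) ≤ 1 := pow_le_one₀ (sq_nonneg _) (sin_sq_le_one θ)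
  have hc := normCentralBinom_pos n
  calc (2 * (n : ℝ) + 1) / (2 * n + 2) * normCentralBinom n * sin θ ^ (2 * n + 2)
      = (2 * (n : ℝ) + 1) / (2 * n + 2) * normCentralBinom n * (sin θ ^ 2) ^ (n + 1) := by ring
    _ ≤ 1 * normCentralBinom n * 1 := by gcongr
    _ = normCentralBinom n := by ring

/-- As `n` grows the mass of `sinDensity n` concentrates at `π / 2`, where the kernel vanishes. -/
theorem tendsto_iteratedIntegral_succ_sinDensity (k : ℕ) {θ : ℝ} (hθ : θ ∈ Icc 0 (π / 2)) :
    Tendsto (fun n => iteratedIntegral (k + 1) (sinDensity n) θ) atTop (𝓝 0) := by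
  have hnonneg (n : ℕ) (t : ℝ) (ht : t ∈ Icc 0 θ) : 0 ≤ sinDensity n t :=
    sinDensity_nonneg n ⟨ht.1, ht.2.trans hθ.2⟩
  refine squeeze_zero (fun n => iteratedIntegral_nonneg hθ.1 (hnonneg n) _) (fun n => ?_)
    (by simpa using tendsto_normCentralBinom_zero.const_mul ((π / 2) ^ (k + 1)))
  calc iteratedIntegral (k + 1) (sinDensity n) θ
      ≤ ∫ t in (0 : ℝ)..θ, (π / 2) ^ (k + 1) * (cos t * sinDensity n t) := by
        refine intervalIntegral.integral_mono_on hθ.1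
          (Continuous.intervalIntegrable (by fun_prop) _ _)
          (Continuous.intervalIntegrable (by fun_prop) _ _) fun t ht => ?_
        rw [← mul_assoc]
        exact mul_le_mul_of_nonneg_right (sub_pow_succ_div_factorial_le_cos ht hθ.2 k)
          (hnonneg n t ht)
    _ = (π / 2) ^ (k + 1) * ∫ t in (0 : ℝ)..θ, cos t * sinDensity n t :=
        intervalIntegral.integral_const_mul _ _
    _ ≤ (π / 2) ^ (k + 1) * normCentralBinom n := by
        gcongr
        exact integral_cos_mul_sinDensity_le n θ

end SineDensities

theorem eq_of_sub_succ_eq_of_tendsto {G : Type*} [AddCommGroup G] [TopologicalSpace G]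
    [IsTopologicalAddGroup G] [T2Space G] {u v : ℕ → G} {l : G}
    (h : ∀ n, u n - u (n + 1) = v n - v (n + 1)) (hu : Tendsto u atTop (𝓝 l))
    (hv : Tendsto v atTop (𝓝 l)) : u = v := by
  funext n
  have hconst (N : ℕ) : u (N + n) - v (N + n) = u n - v n := by
    induction N with
    | zero => rw [zero_add]
    | succ N ih => rw [add_right_comm, ← ih, eq_comm, sub_eq_sub_iff_sub_eq_sub, h (N + n)]
  have hlim : Tendsto (fun N => u (N + n) - v (N + n)) atTop (𝓝 (l - l)) :=
    (tendsto_add_atTop_iff_nat n).2 (hu.sub hv)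
  simp only [hconst, sub_self, tendsto_const_nhds_iff] at hlim
  exact sub_eq_zero.1 hlim

section MultipleTValues

theorem tHead_eq_esymmSum (a n : ℕ) : tHead a n = esymmSum invOddSq a (Iio n) :=
  tsum_strictMono_prod_eq_esymmSum invOddSq a (Iio n)

theorem tTail_eq_esymmSum (b n : ℕ) : tTail b n = esymmSum invOddSq b (Ioi n) :=
  tsum_strictMono_prod_eq_esymmSum invOddSq b (Ioi n)

theorem tHead_zero_left (n : ℕ) : tHead 0 n = 1 := by
  rw [tHead_eq_esymmSum, esymmSum_zero]

theorem tTail_zero_left (n : ℕ) : tTail 0 n = 1 := by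
  rw [tTail_eq_esymmSum, esymmSum_zero]

theorem tHead_succ_zero (a : ℕ) : tHead (a + 1) 0 = 0 := by
  rw [tHead_eq_esymmSum, show Iio (0 : ℕ) = ∅ from Iio_bot, esymmSum_empty_succ]

theorem tHead_nonneg (a n : ℕ) : 0 ≤ tHead a n := by
  rw [tHead_eq_esymmSum]
  exact esymmSum_nonneg invOddSq_nonneg a _

theorem tHead_succ_succ (a n : ℕ) :
    tHead (a + 1) (n + 1) = tHead (a + 1) n + invOddSq n * tHead a n := by
  have hinsert : Iio (n + 1) = insert n (Iio n) := by
    ext i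
    simp only [mem_Iio, mem_insert_iff]
    omega
  simp only [tHead_eq_esymmSum, hinsert]
  exact esymmSum_insert summable_invOddSq self_notMem_Iio a

theorem tTail_succ_left (b n : ℕ) :
    tTail (b + 1) n = tTail (b + 1) (n + 1) + invOddSq (n + 1) * tTail b (n + 1) := by
  have hinsert : Ioi n = insert (n + 1) (Ioi (n + 1)) := by
    ext i
    simp only [mem_Ioi, mem_insert_iff]
    omega
  simp only [tTail_eq_esymmSum]
  rw [hinsert]
  exact esymmSum_insert summable_invOddSq self_notMem_Ioi b

theorem isBoundedUnder_tHead (a : ℕ) : IsBoundedUnder (· ≤ ·) atTop (norm ∘ tHead a) := by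
  refine isBoundedUnder_of ⟨∑' s : Finset ℕ, ∏ i ∈ s, invOddSq i, fun n => ?_⟩
  rw [Function.comp_apply, norm_of_nonneg (tHead_nonneg a n), tHead_eq_esymmSum]
  exact esymmSum_le_tsum_prod invOddSq_nonneg summable_invOddSq a _

theorem tendsto_tTail_succ_zero (b : ℕ) : Tendsto (tTail (b + 1)) atTop (𝓝 0) := by
  simp only [funext (tTail_eq_esymmSum (b + 1))]
  refine tendsto_esymmSum_succ_zero summable_invOddSq (fun i => ?_) b
  filter_upwards [eventually_ge_atTop i] with n hn using hn.not_gt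

theorem iteratedIntegral_sinDensity_pi_div_two (b n : ℕ) :
    iteratedIntegral (2 * b) (sinDensity n) (π / 2) = tTail b n := by
  induction b generalizing n with
  | zero => rw [tTail_zero_left, iteratedIntegral_zero_sinDensity_pi_div_two]
  | succ b ih =>
    refine congrFun (eq_of_sub_succ_eq_of_tendsto (fun n => ?_)
      (tendsto_iteratedIntegral_succ_sinDensity (2 * b + 1) ⟨pi_div_two_pos.le, le_rfl⟩)
      (tendsto_tTail_succ_zero b)) n
    rw [iteratedIntegral_add_two_sinDensity_sub_succ, ih, tTail_succ_left, add_sub_cancel_left]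

theorem sum_range_succ_invOddSq_mul_sinDensity (θ : ℝ) (N : ℕ) :
    ∑ n ∈ Finset.range (N + 1), invOddSq n * sinDensity n θ =
      θ - iteratedIntegral 1 (sinDensity N) θ := by
  induction N with
  | zero =>
    have hderiv : iteratedIntegral 1 (fun t => -sin t) θ = sin θ - θ :=
      iteratedIntegral_one_deriv_deriv (f := fun t => sin t - t) (f' := fun t => cos t - 1)
        (fun t => (hasDerivAt_sin t).sub (hasDerivAt_id t))
        (fun t => (hasDerivAt_cos t).sub_const 1) (by fun_prop) (by simp) (by simp) θ
    have hneg := iteratedIntegral_const_mul 1 (-1) sin θ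
    simp only [neg_one_mul] at hneg
    have hinvOddSq : invOddSq 0 = 1 := by simp [invOddSq]
    rw [Finset.sum_range_one, sinDensity_zero, hinvOddSq]
    linarith
  | succ N ih =>
    rw [Finset.sum_range_succ, ih, ← iteratedIntegral_one_sinDensity_sub_succ]
    ring

theorem sum_range_succ_tHead_succ_mul (a : ℕ) (θ : ℝ) (N : ℕ) :
    ∑ n ∈ Finset.range (N + 1), tHead (a + 1) n * (invOddSq n * sinDensity n θ) =
      ∑ n ∈ Finset.range N, tHead a n * (invOddSq n * iteratedIntegral 1 (sinDensity n) θ) -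
        tHead (a + 1) N * iteratedIntegral 1 (sinDensity N) θ := by
  induction N with
  | zero => simp [tHead_succ_zero]
  | succ N ih =>
    rw [Finset.sum_range_succ, ih, Finset.sum_range_succ,
      ← iteratedIntegral_one_sinDensity_sub_succ, tHead_succ_succ]
    ring

theorem hasSum_tHead_mul_sinDensity (a : ℕ) {θ : ℝ} (hθ : θ ∈ Icc 0 (π / 2)) :
    HasSum (fun n => tHead a n * (invOddSq n * sinDensity n θ))
      (θ ^ (2 * a + 1) / (2 * a + 1).factorial) := by
  have hterm_nonneg (a n : ℕ) {t : ℝ} (ht : t ∈ Icc 0 (π / 2)) :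
      0 ≤ tHead a n * (invOddSq n * sinDensity n t) :=
    mul_nonneg (tHead_nonneg a n) (mul_nonneg (invOddSq_nonneg n) (sinDensity_nonneg n ht))
  have hremainder := tendsto_iteratedIntegral_succ_sinDensity 0 hθ
  induction a generalizing θ with
  | zero =>
    rw [hasSum_iff_tendsto_nat_of_nonneg fun n => hterm_nonneg 0 n hθ,
      ← tendsto_add_atTop_iff_nat 1]
    simpa [tHead_zero_left, sum_range_succ_invOddSq_mul_sinDensity]
      using hremainder.const_sub θ
  | succ a ih =>
    have hmem {t : ℝ} (ht : t ∈ Ioc 0 θ) : t ∈ Icc 0 (π / 2) := ⟨ht.1.le, ht.2.trans hθ.2⟩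
    have hintegrated := hasSum_iteratedIntegral hθ.1
      (fun n => (by fun_prop : Continuous fun t => tHead a n * (invOddSq n * sinDensity n t)))
      (fun n t ht => ?_) (ih hθ hremainder).summable
      (fun t ht => ih (hmem ht) (tendsto_iteratedIntegral_succ_sinDensity 0 (hmem ht))) 1
    · simp only [iteratedIntegral_const_mul, iteratedIntegral_one_pow_div_factorial]
        at hintegrated
      rw [hasSum_iff_tendsto_nat_of_nonneg fun n => hterm_nonneg (a + 1) n hθ,
        ← tendsto_add_atTop_iff_nat 1]
      have hboundary := isBoundedUnder_le_mul_tendsto_zero (isBoundedUnder_tHead (a + 1)) hremainder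
      simpa only [sum_range_succ_tHead_succ_mul, sub_zero, zero_add, mul_add_one, add_right_comm]
        using hintegrated.tendsto_sum_nat.sub hboundary
    · rw [abs_of_nonneg (hterm_nonneg a n (hmem ht))]
      have hmono := monotoneOn_sinDensity n (hmem ht) hθ ht.2
      gcongr
      · exact tHead_nonneg a n
      · exact invOddSq_nonneg n

theorem iteratedIntegral_deriv_invOddSq_mul_sinDensity_pi_div_two (b n : ℕ) :
    iteratedIntegral (2 * b + 1) (fun t => normCentralBinom n * sin t ^ (2 * n) * cos t) (π / 2) =
      invOddSq n * tTail b n := by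
  rw [iteratedIntegral_succ_deriv (hasDerivAt_invOddSq_mul_sinDensity n) (by fun_prop)
    (by simp [sinDensity]), iteratedIntegral_const_mul, iteratedIntegral_sinDensity_pi_div_two]

theorem invOddSq_mul_sinDensity_mul_cot (n : ℕ) {θ : ℝ} (hθ : sin θ ≠ 0) :
    invOddSq n * sinDensity n θ * cot θ =
      1 / (2 * n + 1) * (normCentralBinom n * sin θ ^ (2 * n) * cos θ) := by
  rw [invOddSq_mul_sinDensity, cot_eq_cos_div_sin, pow_succ]
  field_simp

theorem deriv_invOddSq_mul_sinDensity_mem_Icc (n : ℕ) {θ : ℝ} (hθ : θ ∈ Icc 0 (π / 2)) :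
    normCentralBinom n * sin θ ^ (2 * n) * cos θ ∈ Icc 0 (normCentralBinom n) := by
  have hc := normCentralBinom_pos n
  have hcos : 0 ≤ cos θ := cos_nonneg_of_mem_Icc ⟨by linarith [hθ.1, pi_pos], hθ.2⟩
  have hpow : (sin θ ^ 2) ^ n ≤ 1 := pow_le_one₀ (sq_nonneg _) (sin_sq_le_one θ)
  rw [pow_mul]
  refine ⟨by positivity, ?_⟩
  calc normCentralBinom n * (sin θ ^ 2) ^ n * cos θ
      ≤ normCentralBinom n * 1 * 1 := by
        gcongr
        exact cos_le_one θ
    _ = normCentralBinom n := by ring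

theorem hasSum_iteratedIntegral_pow_mul_cot (a b : ℕ) :
    HasSum (fun n : ℕ => 1 / (2 * (n : ℝ) + 1) ^ 3 * tHead a n * tTail b n)
      (iteratedIntegral (2 * b + 1)
        (fun θ => θ ^ (2 * a + 1) / (2 * a + 1).factorial * cot θ) (π / 2)) := by
  have hcoeff_nonneg (n : ℕ) : 0 ≤ tHead a n * (1 / (2 * n + 1)) :=
    mul_nonneg (tHead_nonneg a n) (by positivity)
  have hbound : Summable fun n => tHead a n * (1 / (2 * n + 1)) * normCentralBinom n := by
    refine (hasSum_tHead_mul_sinDensity a ⟨pi_div_two_pos.le, le_rfl⟩).summable.congr fun n => ?_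
    rw [invOddSq_mul_sinDensity, sin_pi_div_two]
    ring
  have hseries {t : ℝ} (ht : t ∈ Ioc 0 (π / 2)) :
      HasSum (fun n : ℕ => tHead a n * (1 / (2 * n + 1)) *
        (normCentralBinom n * sin t ^ (2 * n) * cos t))
        (t ^ (2 * a + 1) / (2 * a + 1).factorial * cot t) := by
    have hsin : sin t ≠ 0 := (sin_pos_of_pos_of_lt_pi ht.1 (by linarith [ht.2, pi_pos])).ne'
    simpa only [mul_assoc (tHead a _), invOddSq_mul_sinDensity_mul_cot _ hsin] using
      (hasSum_tHead_mul_sinDensity a (Ioc_subset_Icc_self ht)).mul_right (cot t)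
  have hintegrated := hasSum_iteratedIntegral pi_div_two_pos.le (fun n => by fun_prop)
    (fun n t ht => ?_) hbound (fun t ht => hseries ht) (2 * b + 1)
  · convert hintegrated using 2 with n
    rw [iteratedIntegral_const_mul, iteratedIntegral_deriv_invOddSq_mul_sinDensity_pi_div_two,
      invOddSq]
    field_simp
  · obtain ⟨hnonneg, hle⟩ := deriv_invOddSq_mul_sinDensity_mem_Icc n (Ioc_subset_Icc_self ht)
    rw [abs_of_nonneg (mul_nonneg (hcoeff_nonneg n) hnonneg)]
    exact mul_le_mul_of_nonneg_left hle (hcoeff_nonneg n)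

end MultipleTValues

theorem integral_arcsin_arccos_eq_T (a b : ℕ) :
    (∫ x in (0:ℝ)..1,
        Real.arcsin x ^ (2 * a + 1) / ((Nat.factorial (2 * a + 1)) * x) *
          (Real.arccos x ^ (2 * b + 1) / (Nat.factorial (2 * b + 1)))) =
      T a b := by
  rw [integral_mul_arccos_pow_div_factorial
    (fun x => arcsin x ^ (2 * a + 1) / ((2 * a + 1).factorial * x)), T,
    (hasSum_iteratedIntegral_pow_mul_cot a b).tsum_eq]
  refine intervalIntegral.integral_congr fun θ hθ => ?_
  rw [uIcc_of_le pi_div_two_pos.le] at hθ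
  simp only [arcsin_sin (by linarith [hθ.1, pi_pos] : -(π / 2) ≤ θ) hθ.2, cot_eq_cos_div_sin]
  ring
end

section
/- For all nonnegative integers a, b: T(a,b) = π^(2b+1)/(2^(2b+1)(2a+1)!(2b+1)!) · ∫₀^(π/2) x^(2a+1)(1 − 2x/π)^(2b+1) cot(x) dx. -/
open Real

/-! Let `K k n` be the `k`-fold repeated integral from `0` of `c_n sin²ⁿ⁺¹`, with `c_n` chosen so
that `K 1 n (π/2) = 1`. Differentiating `sin²ⁿ⁺³` twice gives
`K (k+2) n = K (k+2) (n+1) + K k (n+1) / (2n+3)²`. Since `K (k+2) n → 0` as `n → ∞`, this telescopes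
to `∑_{m > n} K k m / (2m+1)² = K (k+2) n`. This one identity has two consequences: at `π/2` it
shows by induction on `b` that the tail of `T a b` is `K (2b+1) n (π/2)`, and on `[0, π/2)` it shows
by induction on `a` that `x²ᵃ⁺¹/(2a+1)! = ∑_n tHead a n · c_n sin²ⁿ⁺¹ x / (2n+1)²`. Multiplying the
latter by `(π/2 - x)²ᵇ⁺¹/(2b+1)! · cot x` and integrating term by term, Cauchy's formula for
repeated integration turns each term back into a tail. -/

namespace MultipleT

open Set Filter Topology MeasureTheory

section Chains

variable {α : Type*} [Preorder α]

/-- The strictly increasing `b`-tuples in `α` all of whose entries lie above `x`; these index the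
nested sums over `x < m₁ < ⋯ < m_b`. -/
abbrev ChainAbove (b : ℕ) (x : α) : Type _ :=
  {f : Fin b → α // StrictMono f ∧ ∀ i, x < f i}

instance (x : α) : Unique (ChainAbove 0 x) where
  default := ⟨Fin.elim0, fun i ↦ i.elim0, fun i ↦ i.elim0⟩
  uniq _ := Subtype.ext (Subsingleton.elim _ _)

/-- A nonempty chain above `x` is its least entry `y > x` together with a chain above `y`. -/
def chainAboveSuccEquiv (b : ℕ) (x : α) :
    ChainAbove (b + 1) x ≃ Σ y : Ioi x, ChainAbove b y.1 where
  toFun f := ⟨⟨f.1 0, f.2.2 0⟩, Fin.tail f.1, f.2.1.comp Fin.strictMono_succ,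
    fun i ↦ f.2.1 i.succ_pos⟩
  invFun p := ⟨Fin.cons p.1.1 p.2.1, Fin.strictMono_cons.2 ⟨p.2.2.2, p.2.2.1⟩,
    Fin.cases p.1.2 fun i ↦ lt_trans p.1.2 (p.2.2.2 i)⟩
  left_inv f := Subtype.ext (Fin.cons_self_tail f.1)
  right_inv _ := rfl

theorem hasSum_prod_chainAbove_succ {w K : α → ℝ} (hw : ∀ y, 0 ≤ w y) {b : ℕ} {x : α} {s : ℝ}
    (hK : ∀ y, HasSum (fun f : ChainAbove b y ↦ ∏ i, w (f.1 i)) (K y))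
    (hs : HasSum (fun y : Ioi x ↦ w y * K y) s) :
    HasSum (fun f : ChainAbove (b + 1) x ↦ ∏ i, w (f.1 i)) s := by
  rw [← (chainAboveSuccEquiv b x).symm.hasSum_iff]
  have fiber (y : Ioi x) : HasSum (fun f : ChainAbove b y.1 ↦
      ∏ i, w (((chainAboveSuccEquiv b x).symm ⟨y, f⟩).1 i)) (w y * K y) := by
    simpa [chainAboveSuccEquiv, Equiv.symm, Fin.prod_univ_succ] using (hK y).mul_left (w y)
  refine .sigma_of_hasSum hs fiber ((summable_sigma_of_nonneg ?_).2 ⟨?_, ?_⟩)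
  · exact fun _ ↦ Finset.prod_nonneg fun _ _ ↦ hw _
  · exact fun y ↦ (fiber y).summable
  · simpa only [Function.comp, (fiber _).tsum_eq] using hs.summable

end Chains

section NestedSums

/-- The factor `1 / (2n+1)²` contributed by each index of a multiple `t`-value of twos. -/
noncomputable def oddSqInv (n : ℕ) : ℝ := 1 / (2 * n + 1) ^ 2

theorem oddSqInv_nonneg (n : ℕ) : 0 ≤ oddSqInv n := by
  unfold oddSqInv; positivity

/-- Reversing tuples identifies the chains below `n` with the chains above `n` in `ℕᵒᵈ`. -/
def chainBelowEquiv (a n : ℕ) :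
    {f : Fin a → ℕ // StrictMono f ∧ ∀ i, f i < n} ≃ ChainAbove a (OrderDual.toDual n) where
  toFun f := ⟨fun i ↦ OrderDual.toDual (f.1 i.rev),
    fun _ _ h ↦ f.2.1 (Fin.rev_lt_rev.2 h), fun i ↦ f.2.2 i.rev⟩
  invFun g := ⟨fun i ↦ OrderDual.ofDual (g.1 i.rev),
    fun _ _ h ↦ g.2.1 (Fin.rev_lt_rev.2 h), fun i ↦ g.2.2 i.rev⟩
  left_inv f := by ext i; simp
  right_inv g := by ext i; simp

theorem hasSum_tHead (a n : ℕ) :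
    HasSum (fun g : ChainAbove a (OrderDual.toDual n) ↦
      ∏ i, oddSqInv (OrderDual.ofDual (g.1 i))) (tHead a n) := by
  have : Finite {f : Fin a → ℕ // StrictMono f ∧ ∀ i, f i < n} :=
    Finite.of_injective (fun f i ↦ (⟨f.1 i, f.2.2 i⟩ : Fin n)) fun f g h ↦
      Subtype.ext <| funext fun i ↦ Fin.ext_iff.1 (congrFun h i)
  rw [← (chainBelowEquiv a n).hasSum_iff]
  have reverse (f : {f : Fin a → ℕ // StrictMono f ∧ ∀ i, f i < n}) :
      ∏ i : Fin a, oddSqInv (f.1 i.rev) = ∏ i, oddSqInv (f.1 i) :=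
    Equiv.prod_comp Fin.revPerm fun i ↦ oddSqInv (f.1 i)
  have unreversed : HasSum (fun f : {f : Fin a → ℕ // StrictMono f ∧ ∀ i, f i < n} ↦
      ∏ i, oddSqInv (f.1 i)) (tHead a n) := Summable.of_finite.hasSum
  rwa [← funext reverse] at unreversed

theorem tHead_zero (n : ℕ) : tHead 0 n = 1 :=
  (hasSum_tHead 0 n).unique (by simp)

theorem tHead_nonneg (a n : ℕ) : 0 ≤ tHead a n :=
  (hasSum_tHead a n).nonneg fun _ ↦ Finset.prod_nonneg fun _ _ ↦ oddSqInv_nonneg _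

theorem tHead_succ (a n : ℕ) :
    tHead (a + 1) n = ∑ k ∈ Finset.Iio n, tHead a k * oddSqInv k := by
  refine (hasSum_tHead (a + 1) n).unique <|
    hasSum_prod_chainAbove_succ (w := fun k ↦ oddSqInv (OrderDual.ofDual k))
      (fun _ ↦ oddSqInv_nonneg _) (fun k ↦ hasSum_tHead a (OrderDual.ofDual k)) ?_
  simp_rw [mul_comm (oddSqInv _)]
  have := (Finset.Iio n).hasSum fun k ↦ tHead a k * oddSqInv k
  rwa [Finset.coe_Iio] at this

theorem hasSum_tTail {K : ℕ → ℕ → ℝ} (h_zero : ∀ n, K 0 n = 1)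
    (h_succ : ∀ b n, HasSum (fun m : Ioi n ↦ oddSqInv m * K b m) (K (b + 1) n)) (b n : ℕ) :
    HasSum (fun f : ChainAbove b n ↦ ∏ i, oddSqInv (f.1 i)) (K b n) := by
  induction b generalizing n with
  | zero => simp [h_zero]
  | succ b ih => exact hasSum_prod_chainAbove_succ oddSqInv_nonneg ih (h_succ b n)

theorem hasSum_sum_Iio_mul {u v V : ℕ → ℝ} {s : ℝ} (hu : ∀ n, 0 ≤ u n) (hv : ∀ n, 0 ≤ v n)
    (hV : ∀ n, HasSum (fun m : Ioi n ↦ v m) (V n)) (hs : HasSum (fun n ↦ u n * V n) s) :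
    HasSum (fun m ↦ (∑ n ∈ Finset.Iio m, u n) * v m) s := by
  let F (p : ℕ × ℕ) : ℝ := u p.1 * (Ioi p.1).indicator v p.2
  have row (n : ℕ) : HasSum (fun m ↦ F (n, m)) (u n * V n) :=
    (hasSum_subtype_iff_indicator.1 (hV n)).mul_left (u n)
  have column (m : ℕ) : HasSum (fun n ↦ F (n, m)) ((∑ n ∈ Finset.Iio m, u n) * v m) := by
    rw [Finset.sum_mul]
    have below : ∑ n ∈ Finset.Iio m, F (n, m) = ∑ n ∈ Finset.Iio m, u n * v m :=
      Finset.sum_congr rfl fun n hn ↦ by simp_all [F]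
    exact below ▸ hasSum_sum_of_ne_finset_zero fun n hn ↦ by simp_all [F]
  have summable : Summable F :=
    (summable_prod_of_nonneg fun p ↦ mul_nonneg (hu _) (indicator_nonneg (fun m _ ↦ hv m) _)).2
      ⟨fun n ↦ (row n).summable, hs.summable.congr fun n ↦ (row n).tsum_eq.symm⟩
  rw [← (summable.hasSum.prod_fiberwise row).unique hs]
  exact ((Equiv.prodComm ℕ ℕ).hasSum_iff.2 summable.hasSum).prod_fiberwise column

end NestedSums

section RepeatedIntegral

/-- The `k`-fold repeated integral `∫₀ˣ ∫₀^{x₁} ⋯ ∫₀^{x_{k-1}} f` of a real function, with base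
point `0`. -/
noncomputable def repeatedIntegral (k : ℕ) (f : ℝ → ℝ) : ℝ → ℝ :=
  (fun g x ↦ ∫ t in (0 : ℝ)..x, g t)^[k] f

variable {f g : ℝ → ℝ} {k : ℕ}

theorem repeatedIntegral_zero (f : ℝ → ℝ) : repeatedIntegral 0 f = f := rfl

theorem repeatedIntegral_succ (k : ℕ) (f : ℝ → ℝ) (x : ℝ) :
    repeatedIntegral (k + 1) f x = ∫ t in (0 : ℝ)..x, repeatedIntegral k f t := by
  rw [repeatedIntegral, Function.iterate_succ_apply']; rfl

theorem repeatedIntegral_add (j k : ℕ) (f : ℝ → ℝ) :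
    repeatedIntegral (j + k) f = repeatedIntegral j (repeatedIntegral k f) :=
  Function.iterate_add_apply _ j k f

theorem continuous_repeatedIntegral (hf : Continuous f) (k : ℕ) :
    Continuous (repeatedIntegral k f) := by
  induction k with
  | zero => exact hf
  | succ k ih =>
    simp_rw [funext (repeatedIntegral_succ k f)]
    exact intervalIntegral.continuous_primitive (fun _ _ ↦ ih.intervalIntegrable _ _) 0

theorem hasDerivAt_repeatedIntegral_succ (hf : Continuous f) (k : ℕ) (x : ℝ) :
    HasDerivAt (repeatedIntegral (k + 1) f) (repeatedIntegral k f x) x := by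
  rw [funext (repeatedIntegral_succ k f)]
  exact (continuous_repeatedIntegral hf k).integral_hasStrictDerivAt 0 x |>.hasDerivAt

theorem repeatedIntegral_const_mul (k : ℕ) (c : ℝ) (f : ℝ → ℝ) (x : ℝ) :
    repeatedIntegral k (fun t ↦ c * f t) x = c * repeatedIntegral k f x := by
  induction k generalizing x with
  | zero => rfl
  | succ k ih => simp only [repeatedIntegral_succ, ih, intervalIntegral.integral_const_mul]

theorem repeatedIntegral_fun_add (hf : Continuous f) (hg : Continuous g) (k : ℕ) (x : ℝ) :
    repeatedIntegral k (fun t ↦ f t + g t) x = repeatedIntegral k f x + repeatedIntegral k g x := by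
  induction k generalizing x with
  | zero => rfl
  | succ k ih =>
    simp only [repeatedIntegral_succ, ih]
    exact intervalIntegral.integral_add
      ((continuous_repeatedIntegral hf k).intervalIntegrable _ _)
      ((continuous_repeatedIntegral hg k).intervalIntegrable _ _)

theorem repeatedIntegral_id (k : ℕ) (x : ℝ) :
    repeatedIntegral k (fun t ↦ t) x = x ^ (k + 1) / (k + 1).factorial := by
  induction k generalizing x with
  | zero => simp [repeatedIntegral_zero]
  | succ k ih =>
    simp only [repeatedIntegral_succ, ih, intervalIntegral.integral_div, integral_pow,
      Nat.factorial_succ (k + 1)]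
    field_simp
    push_cast
    ring

theorem repeatedIntegral_nonneg {c x : ℝ} (hf : ∀ t ∈ Icc 0 c, 0 ≤ f t) (hx : x ∈ Icc 0 c) :
    0 ≤ repeatedIntegral k f x := by
  induction k generalizing x with
  | zero => exact hf x hx
  | succ k ih =>
    rw [repeatedIntegral_succ]
    exact intervalIntegral.integral_nonneg hx.1 fun t ht ↦ ih ⟨ht.1, ht.2.trans hx.2⟩

theorem abs_repeatedIntegral_le {c x M : ℝ} (hf : ∀ t ∈ Icc 0 c, |f t| ≤ M) (hx : x ∈ Icc 0 c) :
    |repeatedIntegral k f x| ≤ M * c ^ k := by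
  induction k generalizing x with
  | zero => simpa [repeatedIntegral_zero] using hf x hx
  | succ k ih =>
    have hM : 0 ≤ M := (abs_nonneg _).trans (hf x hx)
    have hc : 0 ≤ c := hx.1.trans hx.2
    have h_bound (t) (ht : t ∈ uIoc 0 x) : ‖repeatedIntegral k f t‖ ≤ M * c ^ k := by
      rw [uIoc_of_le hx.1] at ht
      exact ih ⟨ht.1.le, ht.2.trans hx.2⟩
    calc |repeatedIntegral (k + 1) f x| ≤ M * c ^ k * |x - 0| := by
          rw [repeatedIntegral_succ]
          exact intervalIntegral.norm_integral_le_of_norm_le_const h_bound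
      _ ≤ M * c ^ k * c := by
          rw [sub_zero, abs_of_nonneg hx.1]
          gcongr
          exact hx.2
      _ = M * c ^ (k + 1) := by ring

theorem repeatedIntegral_one_of_hasDerivAt {f' : ℝ → ℝ} (hf : ∀ x, HasDerivAt f (f' x) x)
    (hf' : Continuous f') (h₀ : f 0 = 0) : repeatedIntegral 1 f' = f := by
  ext x
  rw [repeatedIntegral_succ, repeatedIntegral_zero,
    intervalIntegral.integral_eq_sub_of_hasDerivAt (fun t _ ↦ hf t) (hf'.intervalIntegrable _ _),
    h₀, sub_zero]

theorem repeatedIntegral_two_of_hasDerivAt {f' f'' : ℝ → ℝ} (hf : ∀ x, HasDerivAt f (f' x) x)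
    (hf' : ∀ x, HasDerivAt f' (f'' x) x) (hf'' : Continuous f'') (h₀ : f 0 = 0) (h₁ : f' 0 = 0) :
    repeatedIntegral 2 f'' = f := by
  have h_cont : Continuous f' := continuous_iff_continuousAt.2 fun x ↦ (hf' x).continuousAt
  rw [repeatedIntegral_add 1 1, repeatedIntegral_one_of_hasDerivAt hf' hf'' h₁,
    repeatedIntegral_one_of_hasDerivAt hf h_cont h₀]

theorem repeatedIntegral_succ_eq_integral (hf : Continuous f) (k : ℕ) (x : ℝ) :
    repeatedIntegral (k + 1) f x = ∫ t in (0 : ℝ)..x, (x - t) ^ k / k.factorial * f t := by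
  induction k generalizing f with
  | zero => simp [repeatedIntegral_succ, repeatedIntegral_zero]
  | succ k ih =>
    have h_kernel (t : ℝ) : HasDerivAt (fun t ↦ (x - t) ^ (k + 1) / (k + 1).factorial)
        (-((x - t) ^ k / k.factorial)) t := by
      convert! (((hasDerivAt_id t).const_sub x).pow (k + 1)).div_const _ using 1
      simp only [id_eq, add_tsub_cancel_right, Nat.factorial_succ, Nat.cast_mul, Nat.cast_add_one]
      field_simp
    have h_parts := intervalIntegral.integral_mul_deriv_eq_deriv_mul (a := 0) (b := x)
      (fun t _ ↦ h_kernel t) (fun t _ ↦ hasDerivAt_repeatedIntegral_succ hf 0 t)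
      (Continuous.intervalIntegrable (by fun_prop) _ _) (hf.intervalIntegrable _ _)
    rw [repeatedIntegral_add (k + 1) 1, ih (continuous_repeatedIntegral hf 1)]
    simpa [repeatedIntegral_succ, repeatedIntegral_zero] using h_parts.symm

end RepeatedIntegral

section Series

theorem hasSum_of_telescoping {g h : ℕ → ℝ} (h_nonneg : ∀ n, 0 ≤ h n)
    (h_step : ∀ n, g n = g (n + 1) + h n) (hg : Tendsto g atTop (𝓝 0)) : HasSum h (g 0) := by
  have h_partial (N : ℕ) : ∑ n ∈ Finset.range N, h n = g 0 - g N := by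
    rw [← Finset.sum_range_sub']
    exact Finset.sum_congr rfl fun n _ ↦ by linarith [h_step n]
  rw [hasSum_iff_tendsto_nat_of_nonneg h_nonneg]
  simpa [h_partial] using hg.const_sub (g 0)

theorem hasSum_Ioi_of_telescoping {g h : ℕ → ℝ} (h_nonneg : ∀ n, 0 ≤ h n)
    (h_step : ∀ n, g n = g (n + 1) + h (n + 1)) (hg : Tendsto g atTop (𝓝 0)) (n : ℕ) :
    HasSum (fun m : Ioi n ↦ h m) (g n) := by
  have h_range : Ioi n = range (n + 1 + ·) := by
    ext m
    simp [← Nat.succ_le_iff, le_iff_exists_add, eq_comm]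
  rw [h_range, (add_right_injective (n + 1)).hasSum_range_iff]
  exact hasSum_of_telescoping (g := fun i ↦ g (n + i)) (fun i ↦ h_nonneg _)
    (fun i ↦ by simpa [add_assoc, add_comm 1] using h_step (n + i))
    (by simpa only [add_comm n] using (tendsto_add_atTop_iff_nat n).2 hg)

theorem hasSum_intervalIntegral_of_nonneg {a b : ℝ} {F : ℕ → ℝ → ℝ} {f : ℝ → ℝ} (hab : a ≤ b)
    (hF : ∀ n, AEStronglyMeasurable (F n) (volume.restrict (Ioc a b)))
    (hf : IntervalIntegrable f volume a b) (h_nonneg : ∀ n, ∀ x ∈ Ioo a b, 0 ≤ F n x)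
    (h_sum : ∀ x ∈ Ioo a b, HasSum (fun n ↦ F n x) (f x)) :
    HasSum (fun n ↦ ∫ x in a..b, F n x) (∫ x in a..b, f x) := by
  have of_Ioo {p : ℝ → Prop} (hp : ∀ x ∈ Ioo a b, p x) : ∀ᵐ x, x ∈ uIoc a b → p x := by
    filter_upwards [Measure.ae_ne volume b] with x h_ne hx
    rw [uIoc_of_le hab] at hx
    exact hp x ⟨hx.1, hx.2.lt_of_ne h_ne⟩
  refine intervalIntegral.hasSum_integral_of_dominated_convergence F
    (by rwa [uIoc_of_le hab]) (fun n ↦ of_Ioo fun x hx ↦ ?_)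
    (of_Ioo fun x hx ↦ (h_sum x hx).summable) ?_ (of_Ioo h_sum)
  · rw [Real.norm_of_nonneg (h_nonneg n x hx)]
  · exact hf.congr_uIoo fun x hx ↦ (h_sum x (uIoo_of_le hab ▸ hx)).tsum_eq.symm

end Series

section Trigonometric

variable {x : ℝ}

theorem hasDerivAt_sin_pow (m : ℕ) (x : ℝ) :
    HasDerivAt (fun x ↦ sin x ^ (m + 1)) ((m + 1) * sin x ^ m * cos x) x := by
  simpa using (hasDerivAt_sin x).fun_pow (m + 1)

theorem hasDerivAt_sin_pow_mul_cos (m : ℕ) (x : ℝ) :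
    HasDerivAt (fun x ↦ sin x ^ (m + 1) * cos x)
      ((m + 1) * sin x ^ m - (m + 2) * sin x ^ (m + 2)) x := by
  convert! (hasDerivAt_sin_pow m x).mul (hasDerivAt_cos x) using 1
  linear_combination (m + 1) * sin x ^ m * (sin_sq_add_cos_sq x).symm

theorem sin_mem_Icc (hx : x ∈ Icc 0 (π / 2)) : sin x ∈ Icc 0 1 :=
  ⟨sin_nonneg_of_mem_Icc ⟨hx.1, by linarith [hx.2, pi_pos]⟩, sin_le_one x⟩

theorem sin_pos_of_mem_Ioc (hx : x ∈ Ioc 0 (π / 2)) : 0 < sin x :=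
  sin_pos_of_pos_of_lt_pi hx.1 (by linarith [hx.2, pi_pos])

theorem cot_nonneg_of_mem_Icc (hx : x ∈ Icc 0 (π / 2)) : 0 ≤ cot x := by
  rw [cot_eq_cos_div_sin]
  exact div_nonneg (cos_nonneg_of_neg_pi_div_two_le_of_le (by linarith [hx.1, pi_pos]) hx.2)
    (sin_mem_Icc hx).1

theorem intervalIntegrable_mul_cot : IntervalIntegrable (fun x ↦ x * cot x) volume 0 (π / 2) := by
  have h_cont : ContinuousOn (fun x ↦ cos x / sinc x) (uIcc 0 (π / 2)) := by
    refine continuous_cos.continuousOn.div continuous_sinc.continuousOn fun x hx ↦ ?_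
    rw [uIcc_of_le pi_div_two_pos.le] at hx
    rcases hx.1.eq_or_lt with rfl | h_pos
    · simp
    · rw [sinc_of_ne_zero h_pos.ne']
      exact div_ne_zero (sin_pos_of_mem_Ioc ⟨h_pos, hx.2⟩).ne' h_pos.ne'
  refine h_cont.intervalIntegrable.congr fun x hx ↦ ?_
  rw [uIoc_of_le pi_div_two_pos.le] at hx
  simp only [sinc_of_ne_zero hx.1.ne', cot_eq_cos_div_sin]
  rw [div_div_eq_mul_div, mul_comm, mul_div_assoc]

end Trigonometric

section WallisIntegral

/-- The constant `c_n` of Wallis' formula `c_n ∫ sin²ⁿ⁺¹ x dx = 1`, with integration over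
`[0, π/2]`. -/
noncomputable def wallisCoeff (n : ℕ) : ℝ := (2 * n + 1) * (n.centralBinom / 4 ^ n)

/-- The probability density `c_n sin²ⁿ⁺¹ x` on `[0, π/2]`. -/
noncomputable def wallisDensity (n : ℕ) (x : ℝ) : ℝ := wallisCoeff n * sin x ^ (2 * n + 1)

/-- The `k`-fold repeated integral of `wallisDensity n` at `x`. The even `k` generate the powers of
`x` and the odd `k` evaluate, at `x = π/2`, the tails `tTail`. -/
noncomputable def wallisIntegral (k n : ℕ) (x : ℝ) : ℝ :=
  repeatedIntegral k (wallisDensity n) x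

variable {k n : ℕ} {x : ℝ}

theorem wallisCoeff_nonneg (n : ℕ) : 0 ≤ wallisCoeff n := by
  unfold wallisCoeff; positivity

theorem wallisCoeff_le (n : ℕ) : wallisCoeff n ≤ 2 * n + 1 :=
  mul_le_of_le_one_right (by positivity) <|
    div_le_one_of_le₀ (mod_cast n.centralBinom_le_four_pow) (by positivity)

theorem wallisCoeff_succ (n : ℕ) :
    wallisCoeff (n + 1) * (2 * n + 2) = wallisCoeff n * (2 * n + 3) := by
  have h : ((n + 1) * (n + 1).centralBinom : ℝ) = 2 * (2 * n + 1) * n.centralBinom :=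
    mod_cast n.succ_mul_centralBinom_succ
  simp only [wallisCoeff, pow_succ, Nat.cast_add_one]
  field_simp
  linear_combination 2 * (2 * n + 3) * h

theorem wallisDensity_zero : wallisDensity 0 = sin := by
  ext; simp [wallisDensity, wallisCoeff]

theorem continuous_wallisDensity (n : ℕ) : Continuous (wallisDensity n) := by
  unfold wallisDensity; fun_prop

theorem wallisDensity_nonneg (hx : x ∈ Icc 0 (π / 2)) : 0 ≤ wallisDensity n x :=
  mul_nonneg (wallisCoeff_nonneg n) (pow_nonneg (sin_mem_Icc hx).1 _)

theorem wallisIntegral_nonneg (hx : x ∈ Icc 0 (π / 2)) : 0 ≤ wallisIntegral k n x :=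
  repeatedIntegral_nonneg (fun _ ↦ wallisDensity_nonneg) hx

theorem integral_wallisIntegral (k n : ℕ) (x : ℝ) :
    ∫ t in (0 : ℝ)..x, wallisIntegral k n t = wallisIntegral (k + 1) n x :=
  (repeatedIntegral_succ k _ x).symm

theorem continuous_wallisIntegral (k n : ℕ) : Continuous (wallisIntegral k n) :=
  continuous_repeatedIntegral (continuous_wallisDensity n) k

theorem repeatedIntegral_two_wallisDensity_sub (n : ℕ) :
    repeatedIntegral 2 (fun x ↦ wallisDensity n x - wallisDensity (n + 1) x) =
      fun x ↦ oddSqInv (n + 1) * wallisDensity (n + 1) x := by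
  let d : ℝ := oddSqInv (n + 1) * wallisCoeff (n + 1)
  refine repeatedIntegral_two_of_hasDerivAt
    (f' := fun x ↦ d * ((2 * n + 3) * (sin x ^ (2 * n + 2) * cos x)))
    (fun x ↦ ?_) (fun x ↦ ?_) ?_ ?_ ?_
  · convert! (hasDerivAt_sin_pow (2 * n + 2) x).const_mul d using 1
    · ext x
      simp only [wallisDensity, d]
      ring
    · push_cast
      ring
  · convert! ((hasDerivAt_sin_pow_mul_cos (2 * n + 1) x).const_mul (2 * n + 3 : ℝ)).const_mul d
      using 1
    simp only [wallisDensity, oddSqInv, d]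
    push_cast
    field_simp
    linear_combination -(2 * n + 3) * sin x ^ (2 * n + 1) * wallisCoeff_succ n
  · exact (continuous_wallisDensity n).sub (continuous_wallisDensity (n + 1))
  · simp [wallisDensity]
  · simp

theorem wallisIntegral_add_two (k n : ℕ) (x : ℝ) :
    wallisIntegral (k + 2) n x =
      wallisIntegral (k + 2) (n + 1) x + oddSqInv (n + 1) * wallisIntegral k (n + 1) x := by
  have h_diff : repeatedIntegral (k + 2) (fun x ↦ wallisDensity n x - wallisDensity (n + 1) x) x =
      oddSqInv (n + 1) * wallisIntegral k (n + 1) x := by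
    rw [repeatedIntegral_add, repeatedIntegral_two_wallisDensity_sub, repeatedIntegral_const_mul]
    rfl
  have h_add := repeatedIntegral_fun_add (continuous_wallisDensity (n + 1))
    ((continuous_wallisDensity n).sub (continuous_wallisDensity (n + 1))) (k + 2) x
  simp only [Pi.sub_apply, add_sub_cancel] at h_add
  rw [← h_diff]
  exact h_add

theorem wallisIntegral_zero_add_wallisIntegral_zero (k : ℕ) (x : ℝ) :
    wallisIntegral k 0 x + wallisIntegral (k + 2) 0 x = x ^ (k + 1) / (k + 1).factorial := by
  have h_two : repeatedIntegral 2 sin = fun x ↦ x - sin x :=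
    repeatedIntegral_two_of_hasDerivAt (fun x ↦ (hasDerivAt_id x).sub (hasDerivAt_sin x))
      (fun x ↦ by simpa using (hasDerivAt_cos x).const_sub 1) continuous_sin (by simp) (by simp)
  simp only [wallisIntegral, wallisDensity_zero]
  rw [repeatedIntegral_add, h_two, ← repeatedIntegral_fun_add continuous_sin (by fun_prop),
    ← repeatedIntegral_id]
  simp

theorem antitone_wallisIntegral_add_two (hx : x ∈ Icc 0 (π / 2)) :
    Antitone fun n ↦ wallisIntegral (k + 2) n x :=
  antitone_nat_of_succ_le fun n ↦ by
    rw [wallisIntegral_add_two k n]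
    exact le_add_of_nonneg_right (mul_nonneg (oddSqInv_nonneg _) (wallisIntegral_nonneg hx))

theorem abs_wallisDensity_le {t : ℝ} (hx : x ≤ π / 2) (ht : t ∈ Icc 0 x) :
    |wallisDensity n t| ≤ (2 * n + 1) * sin x ^ (2 * n + 1) := by
  have ht' : t ∈ Icc 0 (π / 2) := ⟨ht.1, ht.2.trans hx⟩
  have h_sin : sin t ≤ sin x :=
    sin_le_sin_of_le_of_le_pi_div_two (by linarith [ht.1, pi_pos]) hx ht.2
  rw [abs_of_nonneg (wallisDensity_nonneg ht')]
  exact mul_le_mul (wallisCoeff_le n) (pow_le_pow_left₀ (sin_mem_Icc ht').1 h_sin _)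
    (pow_nonneg (sin_mem_Icc ht').1 _) (by positivity)

theorem tendsto_wallisIntegral (k : ℕ) (hx : x ∈ Ico 0 (π / 2)) :
    Tendsto (fun n ↦ wallisIntegral k n x) atTop (𝓝 0) := by
  have hx' : x ∈ Icc 0 (π / 2) := Ico_subset_Icc_self hx
  have h_lt : sin x < 1 := by
    simpa using sin_lt_sin_of_lt_of_le_pi_div_two (by linarith [hx.1, pi_pos]) le_rfl hx.2
  have h_odd : Tendsto (fun n : ℕ ↦ 2 * n + 1) atTop atTop :=
    tendsto_atTop_mono (f := id) (fun n ↦ by simp only [id]; lia) tendsto_id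
  have h_bound : Tendsto (fun n : ℕ ↦ (2 * n + 1) * sin x ^ (2 * n + 1) * x ^ k) atTop (𝓝 0) := by
    simpa using ((tendsto_self_mul_const_pow_of_lt_one (sin_mem_Icc hx').1 h_lt).comp
      h_odd).mul_const (x ^ k)
  exact squeeze_zero_norm (fun n ↦ abs_repeatedIntegral_le
    (fun t ↦ abs_wallisDensity_le hx'.2) ⟨hx.1, le_rfl⟩) h_bound

theorem tendsto_wallisIntegral_pi_div_two (k : ℕ) :
    Tendsto (fun n ↦ wallisIntegral (k + 3) n (π / 2)) atTop (𝓝 0) := by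
  have h_dom := intervalIntegral.tendsto_integral_filter_of_dominated_convergence
    (μ := volume) (a := 0) (b := π / 2) (l := atTop) (F := wallisIntegral (k + 2)) (f := 0)
    (wallisIntegral (k + 2) 0)
    (.of_forall fun n ↦ (continuous_wallisIntegral _ n).aestronglyMeasurable)
    (.of_forall fun n ↦ .of_forall fun t ht ↦ ?_)
    ((continuous_wallisIntegral _ 0).intervalIntegrable _ _) ?_
  · simpa [integral_wallisIntegral] using h_dom
  · rw [uIoc_of_le pi_div_two_pos.le] at ht
    have ht' := Ioc_subset_Icc_self ht
    rw [Real.norm_of_nonneg (wallisIntegral_nonneg ht')]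
    exact antitone_wallisIntegral_add_two ht' n.zero_le
  · filter_upwards [Measure.ae_ne volume (π / 2)] with t h_ne ht
    rw [uIoc_of_le pi_div_two_pos.le] at ht
    exact tendsto_wallisIntegral _ ⟨ht.1.le, ht.2.lt_of_ne h_ne⟩

theorem wallisIntegral_one_pi_div_two (n : ℕ) : wallisIntegral 1 n (π / 2) = 1 := by
  rw [← integral_wallisIntegral]
  simp only [wallisIntegral, repeatedIntegral_zero, wallisDensity,
    intervalIntegral.integral_const_mul]
  induction n with
  | zero => simp [wallisCoeff]
  | succ n ih =>
    have h_ratio : ∫ x in (0 : ℝ)..π / 2, sin x ^ (2 * (n + 1) + 1) =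
        (2 * n + 2) / (2 * n + 3) * ∫ x in (0 : ℝ)..π / 2, sin x ^ (2 * n + 1) := by
      rw [show 2 * (n + 1) + 1 = 2 * n + 1 + 2 by ring, integral_sin_pow]
      simp only [sin_zero, cos_pi_div_two, zero_pow (Nat.succ_ne_zero _)]
      push_cast
      ring
    rw [h_ratio, ← ih]
    field_simp
    linear_combination (∫ x in (0 : ℝ)..π / 2, sin x ^ (2 * n + 1)) * wallisCoeff_succ n

theorem hasSum_Ioi_wallisIntegral (hx : x ∈ Icc 0 (π / 2))
    (h_lim : Tendsto (fun n ↦ wallisIntegral (k + 2) n x) atTop (𝓝 0)) (n : ℕ) :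
    HasSum (fun m : Ioi n ↦ oddSqInv m * wallisIntegral k m x) (wallisIntegral (k + 2) n x) :=
  hasSum_Ioi_of_telescoping (h := fun m ↦ oddSqInv m * wallisIntegral k m x)
    (fun m ↦ mul_nonneg (oddSqInv_nonneg m) (wallisIntegral_nonneg hx))
    (fun m ↦ wallisIntegral_add_two k m x) h_lim n

theorem tTail_eq_wallisIntegral (b n : ℕ) : tTail b n = wallisIntegral (2 * b + 1) n (π / 2) :=
  (hasSum_tTail (K := fun b n ↦ wallisIntegral (2 * b + 1) n (π / 2))
    wallisIntegral_one_pi_div_two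
    (fun b n ↦ hasSum_Ioi_wallisIntegral ⟨pi_div_two_pos.le, le_rfl⟩
      (tendsto_wallisIntegral_pi_div_two (2 * b)) n) b n).tsum_eq

theorem hasSum_wallisIntegral (hx : x ∈ Ico 0 (π / 2)) (k : ℕ) :
    HasSum (fun n ↦ oddSqInv n * wallisIntegral k n x) (x ^ (k + 1) / (k + 1).factorial) := by
  have h_tail := hasSum_of_telescoping (g := fun n ↦ wallisIntegral (k + 2) n x)
    (fun n ↦ mul_nonneg (oddSqInv_nonneg (n + 1))
      (wallisIntegral_nonneg (k := k) (Ico_subset_Icc_self hx)))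
    (fun n ↦ wallisIntegral_add_two k n x) (tendsto_wallisIntegral (k + 2) hx)
  have h_zero := h_tail.zero_add (f := fun n ↦ oddSqInv n * wallisIntegral k n x)
  simpa [oddSqInv, wallisIntegral_zero_add_wallisIntegral_zero] using h_zero

theorem hasSum_tHead_mul_wallisIntegral (hx : x ∈ Ico 0 (π / 2)) (a k : ℕ) :
    HasSum (fun n ↦ tHead a n * (oddSqInv n * wallisIntegral k n x))
      (x ^ (2 * a + k + 1) / (2 * a + k + 1).factorial) := by
  induction a generalizing k with
  | zero => simpa [tHead_zero] using hasSum_wallisIntegral hx k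
  | succ a ih =>
    have hx' := Ico_subset_Icc_self hx
    simp_rw [tHead_succ]
    refine hasSum_sum_Iio_mul (fun n ↦ mul_nonneg (tHead_nonneg a n) (oddSqInv_nonneg n))
      (fun n ↦ mul_nonneg (oddSqInv_nonneg n) (wallisIntegral_nonneg hx'))
      (hasSum_Ioi_wallisIntegral hx' (tendsto_wallisIntegral (k + 2) hx)) ?_
    simpa [mul_assoc, mul_add, add_assoc, add_comm, add_left_comm] using ih (k + 2)

end WallisIntegral

section CotIntegral

theorem hasDerivAt_wallisDensity (n : ℕ) (x : ℝ) :
    HasDerivAt (wallisDensity n) (wallisCoeff n * ((2 * n + 1) * sin x ^ (2 * n) * cos x)) x := by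
  unfold wallisDensity
  simpa using (hasDerivAt_sin_pow (2 * n) x).const_mul (wallisCoeff n)

theorem wallisIntegral_eq_integral_cot {x : ℝ} (hx : x ∈ Icc 0 (π / 2)) (k n : ℕ) :
    wallisIntegral k n x =
      (2 * n + 1) * ∫ t in (0 : ℝ)..x, wallisDensity n t * ((x - t) ^ k / k.factorial * cot t) := by
  let ω' (t : ℝ) : ℝ := wallisCoeff n * ((2 * n + 1) * sin t ^ (2 * n) * cos t)
  have hω' : Continuous ω' := by fun_prop
  have h_prim : repeatedIntegral 1 ω' = wallisDensity n :=
    repeatedIntegral_one_of_hasDerivAt (hasDerivAt_wallisDensity n) hω' (by simp [wallisDensity])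
  have h_cot {t : ℝ} (ht : 0 < sin t) : ω' t = (2 * n + 1) * (wallisDensity n t * cot t) := by
    simp only [ω', wallisDensity, cot_eq_cos_div_sin]
    field_simp
    ring
  calc wallisIntegral k n x = repeatedIntegral (k + 1) ω' x := by
        rw [wallisIntegral, ← h_prim, repeatedIntegral_add]
    _ = ∫ t in (0 : ℝ)..x, (x - t) ^ k / k.factorial * ω' t :=
        repeatedIntegral_succ_eq_integral hω' k x
    _ = ∫ t in (0 : ℝ)..x,
          (2 * n + 1) * (wallisDensity n t * ((x - t) ^ k / k.factorial * cot t)) := by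
        refine intervalIntegral.integral_congr_Ioo_of_le hx.1 fun t ht ↦ ?_
        simp only [h_cot (sin_pos_of_mem_Ioc ⟨ht.1, ht.2.le.trans hx.2⟩)]
        ring
    _ = _ := intervalIntegral.integral_const_mul _ _

theorem integral_wallisDensity_mul_cot (b n : ℕ) :
    ∫ t in (0 : ℝ)..π / 2, wallisDensity n t *
        ((π / 2 - t) ^ (2 * b + 1) / (2 * b + 1).factorial * cot t) =
      tTail b n / (2 * n + 1) := by
  rw [tTail_eq_wallisIntegral, wallisIntegral_eq_integral_cot ⟨pi_div_two_pos.le, le_rfl⟩,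
    mul_div_cancel_left₀ _ (by positivity)]

theorem hasSum_mul_tHead_mul_tTail (a b : ℕ) :
    HasSum (fun n : ℕ ↦ 1 / (2 * (n : ℝ) + 1) ^ 3 * tHead a n * tTail b n)
      (∫ x in (0 : ℝ)..π / 2, x ^ (2 * a + 1) / (2 * a + 1).factorial *
        ((π / 2 - x) ^ (2 * b + 1) / (2 * b + 1).factorial * cot x)) := by
  let κ (x : ℝ) : ℝ := (π / 2 - x) ^ (2 * b + 1) / (2 * b + 1).factorial * cot x
  have h_term (n : ℕ) : ∫ x in (0 : ℝ)..π / 2, tHead a n * (oddSqInv n * wallisDensity n x) * κ x =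
      1 / (2 * (n : ℝ) + 1) ^ 3 * tHead a n * tTail b n := by
    simp_rw [mul_assoc, intervalIntegral.integral_const_mul, κ, integral_wallisDensity_mul_cot,
      oddSqInv]
    field_simp
  have h_int : IntervalIntegrable (fun x ↦ x ^ (2 * a + 1) / (2 * a + 1).factorial * κ x)
      volume 0 (π / 2) := by
    convert! intervalIntegrable_mul_cot.mul_continuousOn (g := fun x ↦ x ^ (2 * a) /
      (2 * a + 1).factorial * ((π / 2 - x) ^ (2 * b + 1) / (2 * b + 1).factorial))
      (by fun_prop) using 2 with x
    simp only [κ]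
    ring
  simp_rw [← h_term]
  refine hasSum_intervalIntegral_of_nonneg pi_div_two_pos.le (fun n ↦ ?_) h_int
    (fun n x hx ↦ ?_) fun x hx ↦ ?_
  · simp only [κ, wallisDensity, cot_eq_cos_div_sin]
    exact Measurable.aestronglyMeasurable (by fun_prop)
  · have hx' := Ioo_subset_Icc_self hx
    exact mul_nonneg (mul_nonneg (tHead_nonneg a n)
      (mul_nonneg (oddSqInv_nonneg n) (wallisDensity_nonneg hx')))
      (mul_nonneg (div_nonneg (pow_nonneg (sub_nonneg.2 hx.2.le) _) (by positivity))
        (cot_nonneg_of_mem_Icc hx'))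
  · exact (hasSum_tHead_mul_wallisIntegral ⟨hx.1.le, hx.2⟩ a 0).mul_right (κ x)

end CotIntegral

end MultipleT

theorem T_eq_cot_integral (a b : ℕ) :
    T a b = π ^ (2 * b + 1) /
        (2 ^ (2 * b + 1) * (Nat.factorial (2 * a + 1)) * (Nat.factorial (2 * b + 1))) *
      ∫ x in (0:ℝ)..(π / 2),
        x ^ (2 * a + 1) * (1 - 2 * x / π) ^ (2 * b + 1) * Real.cot x := by
  have h_rescale (x : ℝ) : (π / 2 - x) ^ (2 * b + 1) =
      π ^ (2 * b + 1) / 2 ^ (2 * b + 1) * (1 - 2 * x / π) ^ (2 * b + 1) := by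
    rw [← div_pow, ← mul_pow]
    field_simp
  rw [T, (MultipleT.hasSum_mul_tHead_mul_tTail a b).tsum_eq, ← intervalIntegral.integral_const_mul]
  refine intervalIntegral.integral_congr fun x _ ↦ ?_
  simp only [h_rescale]
  field_simp
end
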